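/- arXiv:2201.05802 — 3 statements merged into one kernel-verified Lean document; each statement's English description precedes it below -/
import Mathlib

section
/- Let T be a finite tree whose vertex set is partitioned into a set N of terminal nodes and a set S of Steiner nodes, where every Steiner node has degree at least 3 in T and every terminal node has degree at most 3 in T. Then there exist a finite tree T′ whose vertex set is partitioned into the same terminal set N and a Steiner set S′, and a surjection f from the vertex set of T′ onto the vertex set of T, such that: (i) f is the identity on N, so the fiber f⁻¹(t) of every terminal t is the singleton {t}; (ii) f maps S′ onto S, and for each Steiner node s of degree K in T the fiber f⁻¹(s) consists of exactly K − 2 vertices of S′, each of degree exactly 3 in T′, and induces a connected subgraph of T′; (iii) two distinct vertices u, v of T are adjacent in T if and only if some edge of T′ joins a vertex of f⁻¹(u) to a vertex of f⁻¹(v), and in that case this edge of T′ is unique. In particular, every tree topology with Steiner nodes of degree K ≥ 3 is derived by contraction from a Steiner topology in which every Steiner node has degree exactly 3. -/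
open scoped Classical

/-!
A tree with `n` vertices of degree at most `3` satisfies
`∑ b, (3 - deg b) = 3 * n - 2 * (n - 1) = n + 2`, so a path on `K - 2` vertices has exactly `K` free
slots for further edges. Replace each Steiner vertex of degree `K` by such a path and distribute its
`K` edges over the slots, so that every path vertex gets degree `3`; contracting the paths recovers
the given tree. The new graph is again a tree because each of its edges is a bridge: an edge of the
given tree separates the same branches as before, and an edge inside a path separates one part of
the path, together with the branches attached there, from the rest.
-/

theorem isBridge_of_forall_adj {V : Type*} {G : SimpleGraph V} {a b : V} (s : Set V) (ha : a ∈ s)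
    (hb : b ∉ s) (h : ∀ x ∈ s, ∀ y ∉ s, G.Adj x y → s(x, y) = s(a, b)) :
    G.IsBridge s(a, b) := by
  rw [SimpleGraph.isBridge_iff]
  rintro ⟨p⟩
  obtain ⟨d, -, hd, hd'⟩ := p.exists_boundary_dart s ha hb
  have hadj := SimpleGraph.deleteEdges_adj.1 d.adj
  exact hadj.2 (h _ hd _ hd' hadj.1)

theorem isAcyclic_hasse (α : Type*) [LinearOrder α] : (SimpleGraph.hasse α).IsAcyclic := by
  have isBridge_of_covBy {a b : α} (hab : a ⋖ b) : (SimpleGraph.hasse α).IsBridge s(a, b) := by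
    refine isBridge_of_forall_adj (Set.Iic a) Set.self_mem_Iic hab.lt.not_ge fun x hx y hy hxy => ?_
    have hlt : a < y := not_le.1 hy
    have hcov : x ⋖ y := hxy.resolve_right fun h => (hx.trans_lt hlt).not_gt h.lt
    obtain rfl : x = a := (hcov.le_of_lt hlt).antisymm' hx
    rw [hcov.unique_right hab]
  refine SimpleGraph.isAcyclic_iff_forall_adj_isBridge.2 fun a b hab => ?_
  obtain hab | hba := hab
  · exact isBridge_of_covBy hab
  · exact Sym2.eq_swap ▸ isBridge_of_covBy hba

theorem encard_neighborSet_hasse_le_two {α : Type*} [LinearOrder α] (a : α) :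
    ((SimpleGraph.hasse α).neighborSet a).encard ≤ 2 :=
  calc ((SimpleGraph.hasse α).neighborSet a).encard
      = ({b | a ⋖ b} ∪ {b | b ⋖ a}).encard := rfl
    _ ≤ {b | a ⋖ b}.encard + {b | b ⋖ a}.encard := Set.encard_union_le _ _
    _ ≤ 1 + 1 := add_le_add
        (Set.encard_le_one_iff.2 fun _ _ hb hc => CovBy.unique_right hb hc)
        (Set.encard_le_one_iff.2 fun _ _ hb hc => CovBy.unique_left hb hc)
    _ = 2 := one_add_one_eq_two

theorem encard_fst_comp_equiv_preimage_singleton {X ι : Type*} {α : ι → Type*}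
    (e : X ≃ Σ i, α i) (i : ι) : ((fun x => (e x).1) ⁻¹' {i}).encard = ENat.card (α i) := by
  rw [← Set.preimage_preimage (g := Sigma.fst), Set.encard_preimage_of_bijective e.bijective,
    ← Set.range_sigmaMk, ← Set.image_univ, sigma_mk_injective.encard_image, Set.encard_univ]

theorem exists_map_encard_fiber_eq {A B : Type*} [Finite A] [Fintype B] (k : B → ℕ)
    (h : ∑ b, k b = Nat.card A) : ∃ p : A → B, ∀ b, (p ⁻¹' {b}).encard = k b := by
  have hcard : Nat.card A = Nat.card (Σ b, Fin (k b)) := by simp [← h]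
  obtain ⟨E⟩ := Finite.card_eq.1 hcard
  refine ⟨fun a => (E a).1, fun b => ?_⟩
  rw [encard_fst_comp_equiv_preimage_singleton, ENat.card_eq_coe_fintype_card, Fintype.card_fin]

theorem encard_neighborSet_eq_degree {V : Type*} (G : SimpleGraph V) (v : V)
    [Fintype (G.neighborSet v)] : (G.neighborSet v).encard = G.degree v := by
  rw [Set.encard_eq_coe_toFinset_card, Set.toFinset_card, G.card_neighborSet_eq_degree]

theorem ncard_neighborSet_eq_degree {V : Type*} (G : SimpleGraph V) (v : V)
    [Fintype (G.neighborSet v)] : (G.neighborSet v).ncard = G.degree v := by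
  rw [Set.ncard, encard_neighborSet_eq_degree, ENat.toNat_natCast]

theorem exists_attachment_of_isTree {A B : Type*} [Fintype B] {H : SimpleGraph B} (hH : H.IsTree)
    (hdeg : ∀ b, (H.neighborSet b).encard ≤ 3) (hA : Nat.card A = Fintype.card B + 2) :
    ∃ p : A → B, ∀ b, (H.neighborSet b).encard + (p ⁻¹' {b}).encard = 3 := by
  have : Finite A := Nat.finite_of_card_ne_zero (by omega)
  simp only [encard_neighborSet_eq_degree, Nat.cast_le_ofNat] at hdeg
  have hsum : ∑ b, (3 - H.degree b) = Nat.card A := by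
    have hedges := hH.card_edgeFinset
    have hshake := H.sum_degrees_eq_twice_card_edges
    have htotal : ∑ b, (3 - H.degree b) + ∑ b, H.degree b = 3 * Fintype.card B := by
      simp [← Finset.sum_add_distrib, Nat.sub_add_cancel (hdeg _), mul_comm]
    omega
  obtain ⟨p, hp⟩ := exists_map_encard_fiber_eq _ hsum
  refine ⟨p, fun b => ?_⟩
  rw [hp, encard_neighborSet_eq_degree]
  exact_mod_cast Nat.add_sub_cancel' (hdeg b)

theorem isTree_pathGraph {n : ℕ} (hn : n ≠ 0) : (SimpleGraph.pathGraph n).IsTree := by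
  obtain ⟨n, rfl⟩ := Nat.exists_eq_succ_of_ne_zero hn
  exact ⟨SimpleGraph.pathGraph_connected n, isAcyclic_hasse _⟩

theorem exists_pathGraph_attachment {A : Type*} (hA : 3 ≤ Nat.card A) :
    ∃ p : A → Fin (Nat.card A - 2), ∀ i,
      ((SimpleGraph.pathGraph _).neighborSet i).encard + (p ⁻¹' {i}).encard = 3 :=
  exists_attachment_of_isTree (isTree_pathGraph (by omega))
    (fun i => (encard_neighborSet_hasse_le_two i).trans (by norm_num))
    (by rw [Fintype.card_fin]; omega)

section Expansion

variable {V : Type*} {T : SimpleGraph V} {F : V → Type*} {H : ∀ v, SimpleGraph (F v)}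
  {port : ∀ v, T.neighborSet v → F v}

variable (H port) in
/-- The adjacency relation of `expansion`: `inner` edges lie within a single `H v`, and `outer`
edges are those of `T`, reattached at the ports. -/
inductive ExpansionAdj : (Σ v, F v) → (Σ v, F v) → Prop
  | inner {v : V} {a b : F v} (h : (H v).Adj a b) : ExpansionAdj ⟨v, a⟩ ⟨v, b⟩
  | outer {u v : V} (h : T.Adj u v) : ExpansionAdj ⟨u, port u ⟨v, h⟩⟩ ⟨v, port v ⟨u, h.symm⟩⟩

theorem ExpansionAdj.ne {x y : Σ v, F v} (h : ExpansionAdj H port x y) : x ≠ y := by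
  obtain h | h := h
  · exact sigma_mk_injective.ne h.ne
  · exact fun hxy => h.ne (congrArg Sigma.fst hxy)

variable (H port) in
/-- The graph obtained from `T` by replacing each vertex `v` with the graph `H v`; the edge of `T`
between `v` and a neighbour `u` is attached to the vertex `port v u` of `H v`. -/
def expansion : SimpleGraph (Σ v, F v) where
  Adj := ExpansionAdj H port
  symm := ⟨by
    rintro _ _ (h | h)
    · exact .inner h.symm
    · exact .outer h.symm⟩
  loopless := ⟨fun _ h => h.ne rfl⟩

namespace expansion

theorem adj_inner {v : V} {a b : F v} (h : (H v).Adj a b) :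
    (expansion H port).Adj ⟨v, a⟩ ⟨v, b⟩ :=
  .inner h

theorem adj_outer {u v : V} (h : T.Adj u v) :
    (expansion H port).Adj ⟨u, port u ⟨v, h⟩⟩ ⟨v, port v ⟨u, h.symm⟩⟩ :=
  .outer h

theorem adj_of_fst_ne {x y : Σ v, F v} (h : (expansion H port).Adj x y) (hne : x.1 ≠ y.1) :
    T.Adj x.1 y.1 := by
  obtain _ | h := h
  · exact absurd rfl hne
  · exact h

theorem existsUnique_adj_between_fibers {u v : V} (h : T.Adj u v) :
    ∃! p : (Σ v, F v) × (Σ v, F v), p.1.1 = u ∧ p.2.1 = v ∧ (expansion H port).Adj p.1 p.2 := by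
  refine ⟨(_, _), ⟨rfl, rfl, adj_outer h⟩, ?_⟩
  rintro ⟨x, y⟩ ⟨rfl, rfl, hxy⟩
  obtain hin | hout := hxy
  · exact absurd h T.irrefl
  · rfl

theorem adj_iff_exists_adj_between_fibers {u v : V} (huv : u ≠ v) :
    T.Adj u v ↔ ∃ x y : Σ v, F v, x.1 = u ∧ y.1 = v ∧ (expansion H port).Adj x y := by
  refine ⟨fun h => ⟨_, _, rfl, rfl, adj_outer h⟩, ?_⟩
  rintro ⟨x, y, rfl, rfl, hxy⟩
  exact adj_of_fst_ne hxy huv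

theorem connected_induce_fiber {v : V} (hH : (H v).Connected) :
    ((expansion H port).induce (Sigma.fst ⁻¹' {v})).Connected := by
  let φ : H v →g (expansion H port).induce (Sigma.fst ⁻¹' {v}) :=
    ⟨fun a => ⟨⟨v, a⟩, rfl⟩, adj_inner⟩
  refine hH.map φ ?_
  rintro ⟨⟨_, a⟩, rfl⟩
  exact ⟨a, rfl⟩

theorem reachable_inner {v : V} {a b : F v} (h : (H v).Reachable a b) :
    (expansion H port).Reachable ⟨v, a⟩ ⟨v, b⟩ :=
  h.map (⟨Sigma.mk v, adj_inner⟩ : H v →g expansion H port)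

theorem connected (hT : T.Connected) (hH : ∀ v, (H v).Connected) :
    (expansion H port).Connected := by
  have reachable_of_walk {u v : V} (p : T.Walk u v) :
      ∀ a b, (expansion H port).Reachable ⟨u, a⟩ ⟨v, b⟩ := by
    induction p with
    | nil => exact fun a b => reachable_inner ((hH _).preconnected a b)
    | cons h _ ih =>
      exact fun a b => (reachable_inner ((hH _).preconnected a _)).trans
        ((adj_outer h).reachable.trans (ih _ b))
  have : Nonempty (Σ v, F v) :=
    hT.nonempty.elim fun v => (hH v).nonempty.elim fun a => ⟨⟨v, a⟩⟩
  refine ⟨fun x y => ?_⟩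
  obtain ⟨p⟩ := hT.preconnected x.1 y.1
  exact reachable_of_walk p x.2 y.2

theorem isBridge_outer {u v : V} (h : T.Adj u v) (huv : T.IsBridge s(u, v)) :
    (expansion H port).IsBridge s(⟨u, port u ⟨v, h⟩⟩, ⟨v, port v ⟨u, h.symm⟩⟩) := by
  refine isBridge_of_forall_adj {x | (T.deleteEdges {s(u, v)}).Reachable u x.1}
    (SimpleGraph.Reachable.refl u) huv fun x hx y hy hxy => ?_
  obtain hin | @⟨x, y, hxy⟩ := hxy
  · exact absurd hx hy
  have hedge : s(x, y) = s(u, v) := by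
    by_contra hne
    exact hy (hx.trans (SimpleGraph.deleteEdges_adj.2 ⟨hxy, hne⟩).reachable)
  obtain ⟨rfl, rfl⟩ | ⟨rfl, rfl⟩ := Sym2.eq_iff.1 hedge
  · rfl
  · exact Sym2.eq_swap

theorem isBridge_inner (hT : T.IsAcyclic) {v : V} {a b : F v} (hab : (H v).IsBridge s(a, b)) :
    (expansion H port).IsBridge s(⟨v, a⟩, ⟨v, b⟩) := by
  let A : Set (F v) := {c | ((H v).deleteEdges {s(a, b)}).Reachable a c}
  let branches : Set (Σ v, F v) :=
    {x | ∃ (u : V) (h : T.Adj v u), port v ⟨u, h⟩ ∈ A ∧ (T.deleteEdges {s(v, u)}).Reachable u x.1}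
  have not_mem_branches (c : F v) : ⟨v, c⟩ ∉ branches := fun ⟨u, h, _, hu⟩ =>
    SimpleGraph.isAcyclic_iff_forall_adj_isBridge.1 hT h hu.symm
  refine isBridge_of_forall_adj (Sigma.mk v '' A ∪ branches)
    (.inl ⟨a, SimpleGraph.Reachable.refl a, rfl⟩) ?_ fun x hx y hy hxy => ?_
  · rintro (⟨c, hc, hcb⟩ | hb)
    · cases hcb
      exact hab hc
    · exact not_mem_branches b hb
  rw [Set.mem_union, not_or] at hy
  obtain ⟨c, hc, rfl⟩ | ⟨u, h, hu, hux⟩ := hx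
  · obtain @⟨_, _, d, hcd⟩ | @⟨_, w, hvw⟩ := hxy
    · by_contra hne
      have hcd' : ((H v).deleteEdges {s(a, b)}).Adj c d :=
        SimpleGraph.deleteEdges_adj.2 ⟨hcd, fun heq => hne (congrArg (Sym2.map (Sigma.mk v)) heq)⟩
      exact hy.1 ⟨d, hc.trans hcd'.reachable, rfl⟩
    · exact absurd ⟨w, hvw, hc, SimpleGraph.Reachable.refl w⟩ hy.2
  · obtain _ | @⟨x, y, hxy⟩ := hxy
    · exact absurd ⟨u, h, hu, hux⟩ hy.2
    have hedge : s(x, y) = s(v, u) := by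
      by_contra hne
      exact hy.2 ⟨u, h, hu, hux.trans (SimpleGraph.deleteEdges_adj.2 ⟨hxy, hne⟩).reachable⟩
    obtain ⟨rfl, rfl⟩ | ⟨rfl, rfl⟩ := Sym2.eq_iff.1 hedge
    · exact absurd ⟨_, h, hu, hux⟩ (not_mem_branches _)
    · exact absurd ⟨_, hu, rfl⟩ hy.1

theorem isAcyclic (hT : T.IsAcyclic) (hH : ∀ v, (H v).IsAcyclic) :
    (expansion H port).IsAcyclic := by
  refine SimpleGraph.isAcyclic_iff_forall_adj_isBridge.2 fun x y hxy => ?_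
  obtain hin | hout := hxy
  · exact isBridge_inner hT (SimpleGraph.isAcyclic_iff_forall_adj_isBridge.1 (hH _) hin)
  · exact isBridge_outer hout (SimpleGraph.isAcyclic_iff_forall_adj_isBridge.1 hT hout)

theorem neighborSet_eq {v : V} (a : F v) :
    (expansion H port).neighborSet ⟨v, a⟩ =
      Sigma.mk v '' (H v).neighborSet a ∪
        (fun u : T.neighborSet v => ⟨u, port u ⟨v, u.2.symm⟩⟩) '' (port v ⁻¹' {a}) := by
  ext y
  constructor
  · rintro (h | h)
    · exact .inl ⟨_, h, rfl⟩
    · exact .inr ⟨⟨_, h⟩, rfl, rfl⟩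
  · rintro (⟨b, hb, rfl⟩ | ⟨u, rfl, rfl⟩)
    · exact adj_inner hb
    · exact adj_outer u.2

theorem encard_neighborSet {v : V} (a : F v) :
    ((expansion H port).neighborSet ⟨v, a⟩).encard =
      ((H v).neighborSet a).encard + (port v ⁻¹' {a}).encard := by
  rw [neighborSet_eq, Set.encard_union_eq, sigma_mk_injective.encard_image,
    Function.Injective.encard_image]
  · exact fun u w huw => Subtype.ext (congrArg Sigma.fst huw)
  · rw [Set.disjoint_left]
    rintro _ ⟨b, -, rfl⟩ ⟨u, -, huv⟩
    exact u.2.ne (congrArg Sigma.fst huv).symm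

theorem encard_neighborSet_of_subsingleton {v : V} [Subsingleton (F v)] (a : F v) :
    ((expansion H port).neighborSet ⟨v, a⟩).encard = (T.neighborSet v).encard := by
  have hH : (H v).neighborSet a = ∅ := by
    ext b
    simp [Subsingleton.elim b a]
  have hport : port v ⁻¹' {a} = Set.univ := Set.eq_univ_of_forall fun u => Subsingleton.elim _ a
  rw [encard_neighborSet, hH, hport, Set.encard_empty, zero_add, Set.encard_univ]
  rfl

end expansion

end Expansion

universe u w

section Splitting

variable {V : Type*} {N S : Set V} {F : V → Type*} [∀ t : N, Unique (F t)]
  [Small.{w} (Σ s : S, F s)]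

variable (F) in
/-- The splitting of `Σ v, F v` along complementary sets `N` and `S` of indices, where `F` is
trivial on `N`. The part over `S` is shrunk to a prescribed universe. -/
noncomputable def sumSigmaEquiv (hNS : IsCompl N S) :
    N ⊕ Shrink.{w} (Σ s : S, F s) ≃ Σ v, F v :=
  (Equiv.sumCongr (.refl N) (equivShrink _).symm).trans <|
    Equiv.ofBijective (Sum.elim (fun t => ⟨t, default⟩) fun x => ⟨x.1, x.2⟩) <| by
      constructor
      · rintro (t | ⟨s, i⟩) (t' | ⟨s', i'⟩) h
        · exact congrArg Sum.inl (Subtype.ext (congrArg Sigma.fst h))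
        · exact (hNS.disjoint.ne_of_mem t.2 s'.2 (congrArg Sigma.fst h)).elim
        · exact (hNS.disjoint.ne_of_mem t'.2 s.2 (congrArg Sigma.fst h).symm).elim
        · obtain rfl : s = s' := Subtype.ext (congrArg Sigma.fst h)
          obtain rfl : i = i' := sigma_mk_injective h
          rfl
      · rintro ⟨v, i⟩
        obtain hv | hv : v ∈ N ∪ S := hNS.sup_eq_top.ge (Set.mem_univ v)
        · have : Subsingleton (F v) := inferInstanceAs (Subsingleton (F (⟨v, hv⟩ : N)))
          exact ⟨.inl ⟨v, hv⟩, congrArg (Sigma.mk v) (Subsingleton.elim _ _)⟩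
        · exact ⟨.inr ⟨⟨v, hv⟩, i⟩, rfl⟩

theorem fst_sumSigmaEquiv_inr_mem (hNS : IsCompl N S) (x : Shrink.{w} (Σ s : S, F s)) :
    (sumSigmaEquiv F hNS (.inr x)).1 ∈ S :=
  ((equivShrink _).symm x).1.2

theorem eq_inl_of_fst_sumSigmaEquiv_eq (hNS : IsCompl N S) {t : N}
    {x : N ⊕ Shrink.{w} (Σ s : S, F s)} (h : (sumSigmaEquiv F hNS x).1 = t) : x = .inl t := by
  obtain t' | x := x
  · exact congrArg Sum.inl (Subtype.ext h)
  · exact (hNS.disjoint.ne_of_mem t.2 (fst_sumSigmaEquiv_inr_mem hNS x) h.symm).elim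

theorem exists_eq_inr_of_fst_sumSigmaEquiv_mem (hNS : IsCompl N S)
    {x : N ⊕ Shrink.{w} (Σ s : S, F s)} (h : (sumSigmaEquiv F hNS x).1 ∈ S) :
    ∃ y, x = .inr y := by
  obtain t | y := x
  · exact (hNS.disjoint.notMem_of_mem_left t.2 h).elim
  · exact ⟨y, rfl⟩

end Splitting

theorem exists_ports_encard_eq_three {V : Type*} (T : SimpleGraph V) {N S : Set V}
    (hNS : Disjoint N S) (hS : ∀ s ∈ S, 3 ≤ (T.neighborSet s).ncard) :
    ∃ (n : V → ℕ) (port : ∀ v, T.neighborSet v → Fin (n v)),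
      (∀ v, n v ≠ 0) ∧ (∀ t ∈ N, n t = 1) ∧ (∀ s ∈ S, n s = (T.neighborSet s).ncard - 2) ∧
      ∀ s ∈ S, ∀ i, ((SimpleGraph.pathGraph (n s)).neighborSet i).encard +
        (port s ⁻¹' {i}).encard = 3 := by
  have exists_port (v : V) : ∃ (n : ℕ) (p : T.neighborSet v → Fin n), n ≠ 0 ∧ (v ∈ N → n = 1) ∧
      (v ∈ S → n = (T.neighborSet v).ncard - 2) ∧
      (v ∈ S → ∀ i, ((SimpleGraph.pathGraph n).neighborSet i).encard +
        (p ⁻¹' {i}).encard = 3) := by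
    by_cases hv : v ∈ S
    · obtain ⟨p, hp⟩ := exists_pathGraph_attachment (hS v hv)
      exact ⟨_, p, Nat.sub_ne_zero_of_lt (hS v hv), fun h => (hNS.notMem_of_mem_left h hv).elim,
        fun _ => rfl, fun _ => hp⟩
    · exact ⟨1, fun _ => 0, one_ne_zero, fun _ => rfl, fun h => absurd h hv, fun h => absurd h hv⟩
  choose n port hn hnN hnS hport using exists_port
  exact ⟨n, port, hn, hnN, hnS, hport⟩

theorem general_topology_from_steiner_topology_general
    {V : Type u} [Small.{w} V] (T : SimpleGraph V) {N S : Set V} (hNS : IsCompl N S)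
    (hSdeg : ∀ s ∈ S, 3 ≤ (T.neighborSet s).ncard) :
    ∃ (S' : Type w) (T' : SimpleGraph (↥N ⊕ S')) (f : ↥N ⊕ S' → V),
      (Finite V → Finite S') ∧
      (T.Connected → T'.Connected) ∧ (T.IsAcyclic → T'.IsAcyclic) ∧
      (∀ t : ↥N, (T'.neighborSet (Sum.inl t)).encard = (T.neighborSet t).encard) ∧
      Function.Surjective f ∧
      (∀ t : ↥N, f (Sum.inl t) = ↑t) ∧
      (∀ (t : ↥N) (w : ↥N ⊕ S'), f w = ↑t → w = Sum.inl t) ∧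
      (∀ s' : S', f (Sum.inr s') ∈ S) ∧
      (∀ s ∈ S, ∃ s' : S', f (Sum.inr s') = s) ∧
      (∀ s ∈ S, (f ⁻¹' {s}).ncard = (T.neighborSet s).ncard - 2) ∧
      (∀ s ∈ S, ∀ w ∈ f ⁻¹' {s}, (T'.neighborSet w).ncard = 3) ∧
      (∀ s ∈ S, (T'.induce (f ⁻¹' {s})).Connected) ∧
      (∀ u v : V, u ≠ v →
        (T.Adj u v ↔ ∃ a b : ↥N ⊕ S', f a = u ∧ f b = v ∧ T'.Adj a b)) ∧
      (∀ u v : V, T.Adj u v →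
        ∃! p : (↥N ⊕ S') × (↥N ⊕ S'),
          f p.1 = u ∧ f p.2 = v ∧ T'.Adj p.1 p.2) := by
  obtain ⟨n, port, hn, hnN, hnS, hport⟩ := exists_ports_encard_eq_three T hNS.disjoint hSdeg
  have (t : N) : Unique (Fin (n t)) := hnN t t.2 ▸ inferInstance
  let S' := Shrink.{w} (Σ s : S, Fin (n s))
  let e : N ⊕ S' ≃ Σ v, Fin (n v) := sumSigmaEquiv (fun v => Fin (n v)) hNS
  let f : N ⊕ S' → V := fun w => (e w).1
  let G := expansion (fun v => SimpleGraph.pathGraph (n v)) port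
  let φ : G.comap e ≃g G := .comap e G
  have htree v : (SimpleGraph.pathGraph (n v)).IsTree := isTree_pathGraph (hn v)
  have hdeg w : ((G.comap e).neighborSet w).encard = (G.neighborSet (e w)).encard :=
    Set.encard_congr (φ.mapNeighborSet w)
  have hfiber v : (f ⁻¹' {v}).encard = n v := by
    rw [encard_fst_comp_equiv_preimage_singleton, ENat.card_eq_coe_fintype_card, Fintype.card_fin]
  have hsurj : Function.Surjective f := by
    have (v : V) : Nonempty (Fin (n v)) := (htree v).connected.nonempty
    exact Sigma.fst_surjective.comp e.surjective
  refine ⟨S', G.comap e, f, fun _ => Finite.of_equiv _ (equivShrink _),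
    fun hT => φ.connected_iff.2 (expansion.connected hT fun v => (htree v).connected),
    fun hT => φ.isAcyclic_iff.2 (expansion.isAcyclic hT fun v => (htree v).isAcyclic),
    fun t => (hdeg _).trans (expansion.encard_neighborSet_of_subsingleton _),
    hsurj, fun _ => rfl, fun _ _ => eq_inl_of_fst_sumSigmaEquiv_eq hNS,
    fun _ => fst_sumSigmaEquiv_inr_mem hNS _, fun s hs => ?_, fun s hs => ?_, ?_,
    fun s _ => (φ.induce e.bijective.bijOn_preimage).connected_iff.2
      (expansion.connected_induce_fiber (htree s).connected),
    fun u v huv => (expansion.adj_iff_exists_adj_between_fibers huv).trans e.surjective.exists₂,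
    fun u v huv => (e.prodCongr e).existsUnique_congr_right.2
      (expansion.existsUnique_adj_between_fibers huv)⟩
  · obtain ⟨w, rfl⟩ := hsurj s
    obtain ⟨s', rfl⟩ := exists_eq_inr_of_fst_sumSigmaEquiv_mem hNS hs
    exact ⟨s', rfl⟩
  · rw [← hnS s hs, Set.ncard, hfiber, ENat.toNat_natCast]
  · rintro _ hs w rfl
    rw [Set.ncard, hdeg, expansion.encard_neighborSet, hport _ hs]
    rfl

/-- **Theorem 1.** Every general topology (a finite tree whose vertices are
partitioned into terminal nodes of degree at most 3 and Steiner nodes of degree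
at least 3) is derived by contraction from a Steiner topology: there is a tree
`T′` on the same terminal set `N` together with a Steiner set `S′`, and a
surjection `f` onto the vertices of `T`, such that (i) `f` is the identity on
terminals and terminal fibers are singletons; (ii) `f` maps `S′` onto `S`, the
fiber of a Steiner node of degree `K` consists of exactly `K − 2` Steiner
vertices of `T′`, each of degree exactly 3, and induces a connected subgraph of
`T′`; (iii) distinct vertices of `T` are adjacent iff some edge of `T′` joins
their fibers, and such an edge is then unique. -/
theorem general_topology_from_steiner_topology
    {V : Type*} [Fintype V] (T : SimpleGraph V) (hT : T.IsTree)
    (N S : Set V) (hunion : N ∪ S = Set.univ) (hdisj : Disjoint N S)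
    (hSdeg : ∀ s ∈ S, 3 ≤ T.degree s) (hNdeg : ∀ t ∈ N, T.degree t ≤ 3) :
    ∃ (S' : Type) (_ : Fintype S') (T' : SimpleGraph (↥N ⊕ S'))
      (f : ↥N ⊕ S' → V),
      T'.IsTree ∧ Function.Surjective f ∧
      -- (i) f is the identity on N, and terminal fibers are singletons
      (∀ t : ↥N, f (Sum.inl t) = ↑t) ∧
      (∀ (t : ↥N) (w : ↥N ⊕ S'), f w = ↑t → w = Sum.inl t) ∧
      -- (ii) f maps S′ onto S, Steiner fibers have K − 2 degree-3 vertices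
      -- and induce connected subgraphs
      (∀ s' : S', f (Sum.inr s') ∈ S) ∧
      (∀ s ∈ S, ∃ s' : S', f (Sum.inr s') = s) ∧
      (∀ s ∈ S, (f ⁻¹' {s}).ncard = T.degree s - 2) ∧
      (∀ s ∈ S, ∀ w ∈ f ⁻¹' {s}, T'.degree w = 3) ∧
      (∀ s ∈ S, (T'.induce (f ⁻¹' {s})).Connected) ∧
      -- (iii) adjacency in T corresponds to a unique edge between fibers
      (∀ u v : V, u ≠ v →
        (T.Adj u v ↔ ∃ a b : ↥N ⊕ S', f a = u ∧ f b = v ∧ T'.Adj a b)) ∧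
      (∀ u v : V, T.Adj u v →
        ∃! p : (↥N ⊕ S') × (↥N ⊕ S'),
          f p.1 = u ∧ f p.2 = v ∧ T'.Adj p.1 p.2) := by
  simp only [← ncard_neighborSet_eq_degree] at hSdeg ⊢
  obtain ⟨S', T', f, hfin, hconn, hacyc, -, h⟩ :=
    general_topology_from_steiner_topology_general.{_, 0} T
      ⟨hdisj, codisjoint_iff.2 hunion⟩ hSdeg
  have := hfin inferInstance
  exact ⟨S', Fintype.ofFinite S', T', f, ⟨hconn hT.connected, hacyc hT.isAcyclic⟩, h⟩
end

section
/- In the rooted dynamic-programming setting, suppose φ : Fin M → A → ℝ satisfies the Bellman equation. Then for every node i and every location p ∈ A, φ i p equals the minimum, over all assignments x : Fin M → A with x i = p, of the cost of the subtree rooted at i, namely Σ_{j a descendant of i} c j (x j) + Σ_{j a descendant of i, j ≠ i} w j (x j) (x (parent j)). -/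
open scoped Classical

/-!
The subtree rooted at `i` consists of `i` and the pairwise disjoint subtrees rooted at its children,
so its cost satisfies the same recursion as `φ`, with the minima replaced by the costs actually
incurred. Induction from the leaves upwards therefore bounds the subtree cost below by `φ`, with
equality for an assignment in which every node below `i` attains the minimum prescribed by the
location of its parent. Such an assignment is built from `i` downwards.
-/

section Forest

variable {V : Type*} [Fintype V]

/-- The children of `i` in the forest given by `parent`. A root is encoded as a fixed point of
`parent`, and is not counted among its own children. -/
def children [DecidableEq V] (parent : V → V) (i : V) : Finset V :=
  (Finset.univ.filter fun j => parent j = i).erase i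

/-- The descendants of `i`, with `i` itself included, in the forest given by `parent`: the index set
of the subtree rooted at `i`. -/
noncomputable def descendants (parent : V → V) (i : V) : Finset V :=
  Finset.univ.filter fun j => ∃ n : ℕ, parent^[n] j = i

variable {parent : V → V} {i j k : V}

theorem mem_children [DecidableEq V] : j ∈ children parent i ↔ j ≠ i ∧ parent j = i := by
  simp only [children, Finset.mem_erase, Finset.mem_filter_univ]

theorem mem_descendants : k ∈ descendants parent i ↔ ∃ n : ℕ, parent^[n] k = i :=
  Finset.mem_filter_univ k

theorem self_mem_descendants : i ∈ descendants parent i :=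
  mem_descendants.2 ⟨0, rfl⟩

theorem mem_descendants_or_mem_descendants (hi : k ∈ descendants parent i)
    (hj : k ∈ descendants parent j) :
    i ∈ descendants parent j ∨ j ∈ descendants parent i := by
  obtain ⟨m, rfl⟩ := mem_descendants.1 hi
  obtain ⟨n, rfl⟩ := mem_descendants.1 hj
  rcases le_total m n with h | h
  · exact .inl (mem_descendants.2 ⟨n - m, by
      rw [← Function.iterate_add_apply, Nat.sub_add_cancel h]⟩)
  · exact .inr (mem_descendants.2 ⟨m - n, by
      rw [← Function.iterate_add_apply, Nat.sub_add_cancel h]⟩)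

theorem le_of_mem_descendants [Preorder V] (hparent : ∀ j, j ≤ parent j)
    (hk : k ∈ descendants parent i) : k ≤ i := by
  obtain ⟨n, rfl⟩ := mem_descendants.1 hk
  exact Function.id_le_iterate_of_id_le hparent n k

variable [DecidableEq V]

theorem exists_mem_children_of_mem_descendants (hk : k ∈ descendants parent i) (hki : k ≠ i) :
    ∃ j ∈ children parent i, k ∈ descendants parent j := by
  obtain ⟨n, hn⟩ := mem_descendants.1 hk
  induction n with
  | zero => exact absurd hn hki
  | succ n ih =>
    by_cases h : parent^[n] k = i
    · exact ih h
    · rw [Function.iterate_succ_apply'] at hn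
      exact ⟨parent^[n] k, mem_children.2 ⟨h, hn⟩, mem_descendants.2 ⟨n, rfl⟩⟩

variable [PartialOrder V]

theorem lt_of_mem_children (hparent : ∀ j, j ≤ parent j) (hj : j ∈ children parent i) : j < i := by
  obtain ⟨hji, rfl⟩ := mem_children.1 hj
  exact (hparent j).lt_of_ne hji

theorem eq_of_mem_children_of_mem_descendants (hparent : ∀ j, j ≤ parent j)
    (hj : j ∈ children parent i) (hk : k ∈ children parent i) (hjk : j ∈ descendants parent k) :
    j = k := by
  obtain ⟨n, hn⟩ := mem_descendants.1 hjk
  cases n with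
  | zero => exact hn
  | succ n =>
    have hik : i ∈ descendants parent k := mem_descendants.2 ⟨n, (mem_children.1 hj).2 ▸ hn⟩
    exact absurd (le_of_mem_descendants hparent hik) (lt_of_mem_children hparent hk).not_ge

theorem pairwiseDisjoint_descendants_children (hparent : ∀ j, j ≤ parent j) (i : V) :
    (children parent i : Set V).PairwiseDisjoint (descendants parent) := by
  intro j hj k hk hjk
  refine Finset.disjoint_left.2 fun l hlj hlk => hjk ?_
  rcases mem_descendants_or_mem_descendants hlj hlk with h | h
  · exact eq_of_mem_children_of_mem_descendants hparent hj hk h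
  · exact (eq_of_mem_children_of_mem_descendants hparent hk hj h).symm

theorem descendants_erase_self (hparent : ∀ j, j ≤ parent j) (i : V) :
    (descendants parent i).erase i = (children parent i).biUnion (descendants parent) := by
  ext k
  rw [Finset.mem_erase, Finset.mem_biUnion]
  constructor
  · rintro ⟨hki, hk⟩
    exact exists_mem_children_of_mem_descendants hk hki
  · rintro ⟨j, hj, hk⟩
    refine ⟨((le_of_mem_descendants hparent hk).trans_lt (lt_of_mem_children hparent hj)).ne, ?_⟩
    obtain ⟨n, rfl⟩ := mem_descendants.1 hk
    refine mem_descendants.2 ⟨n + 1, ?_⟩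
    rw [Function.iterate_succ_apply', (mem_children.1 hj).2]

theorem sum_descendants_erase_self {R : Type*} [AddCommMonoid R] (hparent : ∀ j, j ≤ parent j)
    (f : V → R) (i : V) :
    ∑ k ∈ (descendants parent i).erase i, f k =
      ∑ j ∈ children parent i, ∑ k ∈ descendants parent j, f k := by
  rw [descendants_erase_self hparent,
    Finset.sum_biUnion (pairwiseDisjoint_descendants_children hparent i)]

end Forest

theorem exists_assignment_of_policy {V A : Type*} [Preorder V] [WellFoundedGT V] {parent : V → V}
    (hparent : ∀ j, parent j ≠ j → j < parent j) (g : V → A → A) (i : V) (p : A) :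
    ∃ x : V → A, x i = p ∧ ∀ k, k ≠ i → parent k ≠ k → x k = g k (x (parent k)) := by
  let step (k : V) (x : ∀ j, k < j → A) : A :=
    if h : k ≠ i ∧ parent k ≠ k then g k (x (parent k) (hparent k h.2)) else p
  have fix_eq := WellFoundedGT.fix_eq step
  refine ⟨WellFoundedGT.fix step, ?_, fun k hki hk => ?_⟩
  · exact (fix_eq i).trans (dif_neg fun h => h.1 rfl)
  · exact (fix_eq k).trans (dif_pos ⟨hki, hk⟩)

section Bellman

variable {V A R : Type*} [Fintype V] [DecidableEq V] [AddCommMonoid R]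

/-- The cost of the subtree rooted at `i` under the assignment `x`: the cost of all its nodes and of
all its edges, where the edge from `j` to its parent is indexed by `j`. -/
noncomputable def subtreeCost (parent : V → V) (c : V → A → R) (w : V → A → A → R) (i : V)
    (x : V → A) : R :=
  ∑ j ∈ descendants parent i, c j (x j) +
    ∑ j ∈ (descendants parent i).erase i, w j (x j) (x (parent j))

/-- `φ` solves the Bellman equation, where `m j p` is the least cost of connecting the subtree
rooted at `j` to a parent located at `p`. Keeping `m` as a separate function, required to be an
attained minimum, gives the equation a meaning for infinite `A` as well. -/
structure IsBellmanSolution [Preorder R] (parent : V → V) (c : V → A → R) (w : V → A → A → R)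
    (m φ : V → A → R) : Prop where
  isLeast : ∀ j, parent j ≠ j → ∀ p, IsLeast (Set.range fun q => w j q p + φ j q) (m j p)
  eq_add_sum : ∀ i p, φ i p = c i p + ∑ j ∈ children parent i, m j p

theorem IsBellmanSolution.of_inf' [LinearOrder R] [Fintype A] [Nonempty A] {parent : V → V}
    {c : V → A → R} {w : V → A → A → R} {φ : V → A → R}
    (hφ : ∀ i p, φ i p = c i p + ∑ j ∈ children parent i,
      Finset.univ.inf' Finset.univ_nonempty fun q => w j q p + φ j q) :
    IsBellmanSolution parent c w
      (fun j p => Finset.univ.inf' Finset.univ_nonempty fun q => w j q p + φ j q) φ where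
  isLeast j _ p := by
    obtain ⟨q, -, hq⟩ := Finset.exists_mem_eq_inf' Finset.univ_nonempty fun q => w j q p + φ j q
    exact ⟨⟨q, hq.symm⟩, Set.forall_mem_range.2 fun q => Finset.inf'_le _ (Finset.mem_univ q)⟩
  eq_add_sum := hφ

variable [PartialOrder V] {parent : V → V} {c : V → A → R} {w : V → A → A → R} {m φ : V → A → R}

theorem subtreeCost_eq_add_sum_children (hparent : ∀ j, j ≤ parent j) (i : V) (x : V → A) :
    subtreeCost parent c w i x = c i (x i) +
      ∑ j ∈ children parent i, (w j (x j) (x i) + subtreeCost parent c w j x) := by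
  have edge_sum (j : V) (hj : j ∈ children parent i) :
      ∑ k ∈ descendants parent j, w k (x k) (x (parent k)) =
        w j (x j) (x i) + ∑ k ∈ (descendants parent j).erase j, w k (x k) (x (parent k)) := by
    rw [← Finset.add_sum_erase _ _ self_mem_descendants, (mem_children.1 hj).2]
  rw [subtreeCost, ← Finset.add_sum_erase _ _ self_mem_descendants,
    sum_descendants_erase_self hparent, sum_descendants_erase_self hparent, add_assoc,
    ← Finset.sum_add_distrib]
  refine congrArg _ (Finset.sum_congr rfl fun j hj => ?_)
  rw [edge_sum j hj, subtreeCost, add_left_comm]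

theorem IsBellmanSolution.le_subtreeCost [Preorder R] [IsOrderedAddMonoid R]
    (hφ : IsBellmanSolution parent c w m φ) (hparent : ∀ j, j ≤ parent j) (i : V) (x : V → A) :
    φ i (x i) ≤ subtreeCost parent c w i x := by
  induction i using WellFoundedLT.induction with
  | ind i ih =>
    rw [hφ.eq_add_sum, subtreeCost_eq_add_sum_children hparent]
    gcongr with j hj
    have hji := lt_of_mem_children hparent hj
    have hj_root : parent j ≠ j := (mem_children.1 hj).2 ▸ hji.ne'
    calc
      m j (x i) ≤ w j (x j) (x i) + φ j (x j) := (hφ.isLeast j hj_root (x i)).2 ⟨x j, rfl⟩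
      _ ≤ w j (x j) (x i) + subtreeCost parent c w j x := by gcongr; exact ih j hji

theorem IsBellmanSolution.subtreeCost_eq [Preorder R] (hφ : IsBellmanSolution parent c w m φ)
    (hparent : ∀ j, j ≤ parent j) (i : V) (x : V → A)
    (hx : ∀ k < i, parent k ≠ k →
      w k (x k) (x (parent k)) + φ k (x k) = m k (x (parent k))) :
    subtreeCost parent c w i x = φ i (x i) := by
  induction i using WellFoundedLT.induction with
  | ind i ih =>
    rw [hφ.eq_add_sum, subtreeCost_eq_add_sum_children hparent]
    refine congrArg _ (Finset.sum_congr rfl fun j hj => ?_)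
    have hji := lt_of_mem_children hparent hj
    obtain ⟨hj_ne, rfl⟩ := mem_children.1 hj
    rw [ih j hji fun k hk => hx k (hk.trans hji), hx j hji hj_ne.symm]

theorem IsBellmanSolution.exists_subtreeCost_eq [Preorder R]
    (hφ : IsBellmanSolution parent c w m φ) (hparent : ∀ j, j ≤ parent j) (i : V) (p : A) :
    ∃ x : V → A, x i = p ∧ subtreeCost parent c w i x = φ i p := by
  have exists_minimizer (k : V) (a : A) :
      ∃ q, parent k ≠ k → w k q a + φ k q = m k a := by
    by_cases hk : parent k = k
    · exact ⟨a, fun h => absurd hk h⟩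
    · obtain ⟨q, hq⟩ := (hφ.isLeast k hk a).1
      exact ⟨q, fun _ => hq⟩
  choose g hg using exists_minimizer
  obtain ⟨x, rfl, hx⟩ :=
    exists_assignment_of_policy (fun j hj => (hparent j).lt_of_ne hj.symm) g i p
  refine ⟨x, rfl, hφ.subtreeCost_eq hparent i x fun k hki hk => ?_⟩
  rw [hx k hki.ne hk]
  exact hg k _ hk

theorem bellman_eq_subtree_min_general [Preorder R] [IsOrderedAddMonoid R]
    (hparent : ∀ j, j ≤ parent j) (hφ : IsBellmanSolution parent c w m φ) (i : V) (p : A) :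
    IsLeast (subtreeCost parent c w i '' {x : V → A | x i = p}) (φ i p) := by
  refine ⟨hφ.exists_subtreeCost_eq hparent i p, ?_⟩
  rintro _ ⟨x, rfl, rfl⟩
  exact hφ.le_subtreeCost hparent i x

end Bellman

theorem le_parent_of_lt_of_ne_root {V : Type*} [Preorder V] {r : V} {parent : V → V}
    (hparent : ∀ i, i ≠ r → i < parent i) (hroot : parent r = r) (j : V) : j ≤ parent j := by
  by_cases hj : j = r
  · rw [hj, hroot]
  · exact (hparent j hj).le

theorem children_eq_filter_ne_root {V : Type*} [Fintype V] [DecidableEq V] [Preorder V] {r : V}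
    {parent : V → V} (hparent : ∀ i, i ≠ r → i < parent i) (hroot : parent r = r) (i : V) :
    children parent i = Finset.univ.filter fun j => j ≠ r ∧ parent j = i := by
  ext j
  rw [mem_children, Finset.mem_filter_univ]
  refine and_congr_left ?_
  rintro rfl
  refine ⟨?_, fun hj => (hparent j hj).ne⟩
  rintro hj rfl
  exact hj hroot.symm

/-- If `φ` satisfies the Bellman equation for the rooted dynamic program, then
`φ i p` is the minimum, over all assignments `x` with `x i = p`, of the cost of
the subtree rooted at `i` (node costs of all descendants of `i` plus the edge
costs from every proper descendant to its parent). -/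
theorem bellman_eq_subtree_min
    {M : ℕ} (hM : 1 ≤ M) (r : Fin M) (hr : (r : ℕ) = M - 1)
    (parent : Fin M → Fin M) (hpar : ∀ i : Fin M, i ≠ r → i < parent i)
    (hroot : parent r = r)
    {A : Type*} [Fintype A] [Nonempty A]
    (c : Fin M → A → ℝ) (w : Fin M → A → A → ℝ) (φ : Fin M → A → ℝ)
    (hφ : ∀ (i : Fin M) (p : A), φ i p = c i p +
      ∑ j ∈ Finset.univ.filter (fun j : Fin M => j ≠ r ∧ parent j = i),
        Finset.univ.inf' Finset.univ_nonempty (fun q : A => w j q p + φ j q)) :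
    ∀ (i : Fin M) (p : A),
      IsLeast
        ((fun x : Fin M → A =>
            (∑ j ∈ Finset.univ.filter (fun j : Fin M => ∃ n : ℕ, parent^[n] j = i),
              c j (x j)) +
            ∑ j ∈ (Finset.univ.filter
                (fun j : Fin M => ∃ n : ℕ, parent^[n] j = i)).erase i,
              w j (x j) (x (parent j))) '' {x : Fin M → A | x i = p})
        (φ i p) := by
  have hsol := IsBellmanSolution.of_inf' fun i p =>
    (hφ i p).trans (by rw [children_eq_filter_ne_root hpar hroot])
  exact bellman_eq_subtree_min_general (le_parent_of_lt_of_ne_root hpar hroot) hsol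
end

section
/- In the rooted dynamic-programming setting, suppose φ : Fin M → A → ℝ satisfies the Bellman equation. Then min_{p ∈ A} φ r p = min_{x : Fin M → A} Φ(x); that is, the minimum cumulative cost at the root over all root locations equals the minimum total cost of the cable network over all joint assignments of locations to the Steiner nodes. -/
/-- The total cost of the cable network for an assignment `x` of locations to
the Steiner nodes: the sum of the node costs plus the sum, over all non-root
nodes, of the cable cost from the node's location to its parent's location. -/
noncomputable def totalCost {M : ℕ} {A : Type*} (r : Fin M)
    (parent : Fin M → Fin M) (c : Fin M → A → ℝ) (w : Fin M → A → A → ℝ)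
    (x : Fin M → A) : ℝ :=
  (∑ i : Fin M, c i (x i)) +
    ∑ j ∈ Finset.univ.filter (fun j : Fin M => j ≠ r), w j (x j) (x (parent j))

/-!
Bellman's equation makes the cost of an assignment `x` telescope to `φ r (x r)` plus the sum over
the edges of the reduced costs `w j (x j) (x (parent j)) + φ j (x j) - m j (x (parent j))`, where
`m j p` is the infimum over `q` of `w j q p + φ j q`. Each reduced cost has infimum `0` over the
location of its lower endpoint. Relocating a minimal node changes only the reduced cost of the edge
above it, so the nodes can be eliminated from the leaves upwards: with the root location fixed, the
infimum of the whole sum is `0`.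
-/

open Finset Function

theorem isGLB_range_univ_inf' {α β : Type*} [Fintype α] [Nonempty α] [SemilatticeInf β]
    (f : α → β) : IsGLB (Set.range f) (univ.inf' univ_nonempty f) :=
  ⟨Set.forall_mem_range.mpr fun a => inf'_le f (mem_univ a),
    fun _ hb => le_inf' _ _ fun a _ => hb (Set.mem_range_self a)⟩

section EdgeSums

variable {ι A G : Type*} [Preorder ι] {parent : ι → ι} {s : Finset ι} {f : ι → A → A → G}

theorem sum_edge_update_of_minimal [DecidableEq ι] [AddCommMonoid G] {a : ι}
    (ha : Minimal (· ∈ s) a) (hs : ∀ j ∈ s, j < parent j) (x : ι → A) (q : A) :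
    ∑ j ∈ s, f j (update x a q j) (update x a q (parent j)) =
      f a q (x (parent a)) + ∑ j ∈ s.erase a, f j (x j) (x (parent j)) := by
  have parent_ne : ∀ j ∈ s, parent j ≠ a := fun j hj h =>
    ha.not_lt hj (h ▸ hs j hj)
  rw [← add_sum_erase s _ ha.prop, update_self, update_of_ne (parent_ne a ha.prop)]
  congr 1
  refine sum_congr rfl fun j hj => ?_
  rw [update_of_ne (ne_of_mem_erase hj), update_of_ne (parent_ne j (mem_of_mem_erase hj))]

variable [AddCommGroup G] [PartialOrder G] [IsOrderedAddMonoid G]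

theorem nonpos_of_forall_le_sum_edge (hs : ∀ j ∈ s, j < parent j)
    (hf : ∀ j ∈ s, ∀ p, IsGLB (Set.range fun q => f j q p) 0) {y : ι → A} {b : G}
    (hb : ∀ x : ι → A, (∀ i ∉ s, x i = y i) → b ≤ ∑ j ∈ s, f j (x j) (x (parent j))) : b ≤ 0 := by
  classical
  induction s using Finset.strongInduction with
  | H s ih =>
    obtain rfl | hne := s.eq_empty_or_nonempty
    · simpa using hb y fun _ _ => rfl
    obtain ⟨a, ha⟩ := s.exists_minimal hne
    refine ih (s.erase a) (erase_ssubset ha.prop) (fun j hj => hs j (mem_of_mem_erase hj))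
      (fun j hj => hf j (mem_of_mem_erase hj)) fun x hx => ?_
    rw [← sub_nonpos, le_isGLB_iff (hf a ha.prop (x (parent a)))]
    rintro _ ⟨q, rfl⟩
    rw [sub_le_iff_le_add, ← sum_edge_update_of_minimal ha hs]
    refine hb _ fun i hi => ?_
    rw [update_of_ne (ne_of_mem_of_not_mem ha.prop hi).symm]
    exact hx i fun h => hi (mem_of_mem_erase h)

theorem isGLB_sum_edge (hs : ∀ j ∈ s, j < parent j)
    (hf : ∀ j ∈ s, ∀ p, IsGLB (Set.range fun q => f j q p) 0) (y : ι → A) :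
    IsGLB ((fun x : ι → A => ∑ j ∈ s, f j (x j) (x (parent j))) ''
      {x | ∀ i ∉ s, x i = y i}) 0 := by
  refine ⟨?_, fun b hb => nonpos_of_forall_le_sum_edge hs hf fun x hx =>
    hb (Set.mem_image_of_mem _ hx)⟩
  rintro _ ⟨x, -, rfl⟩
  exact sum_nonneg fun j hj => (hf j hj _).1 (Set.mem_range_self _)

end EdgeSums

section Bellman

variable {ι A G : Type*} [Fintype ι] [DecidableEq ι]

/-- The cost of the assignment `x` on a tree with root `r` and an arbitrary finite type of nodes,
with costs in a commutative monoid; for `ι = Fin M` and `G = ℝ` it is `totalCost`. The value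
`parent r` is irrelevant. -/
def treeCost [AddCommMonoid G] (r : ι) (parent : ι → ι) (c : ι → A → G) (w : ι → A → A → G)
    (x : ι → A) : G :=
  ∑ i, c i (x i) + ∑ j with j ≠ r, w j (x j) (x (parent j))

variable [AddCommGroup G]

/-- The cost in excess of the edge infimum `m j p` of placing the node `j` at `q` below its parent
at `p`, the subtree of `j` being accounted for by `φ j q`. -/
def reducedCost (w : ι → A → A → G) (φ m : ι → A → G) (j : ι) (q p : A) : G :=
  w j q p + φ j q - m j p

/-- `φ` solves Bellman's equation with edge infima `m`, where `m j p` is the infimum of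
`w j q p + φ j q` over the locations `q` of the non-root node `j`. These infima are data, as `G`
need not have an infimum operation and `A` need not be finite. -/
structure IsBellmanSolution_s11 [PartialOrder G] (r : ι) (parent : ι → ι) (c : ι → A → G)
    (w : ι → A → A → G) (φ m : ι → A → G) : Prop where
  eq_add_sum : ∀ i p, φ i p = c i p + ∑ j with j ≠ r ∧ parent j = i, m j p
  isGLB : ∀ j ≠ r, ∀ p, IsGLB (Set.range fun q => w j q p + φ j q) (m j p)

namespace IsBellmanSolution_s11

variable [PartialOrder G] {r : ι} {parent : ι → ι} {c : ι → A → G} {w : ι → A → A → G}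
  {φ m : ι → A → G}

theorem sum_apply_eq_sum_cost_add_sum_inf (h : IsBellmanSolution_s11 r parent c w φ m) (x : ι → A) :
    ∑ i, φ i (x i) = ∑ i, c i (x i) + ∑ j with j ≠ r, m j (x (parent j)) := by
  rw [← sum_fiberwise (univ.filter (· ≠ r)) parent, ← sum_add_distrib]
  refine sum_congr rfl fun i _ => ?_
  rw [h.eq_add_sum, filter_filter]
  congr 1
  refine sum_congr rfl fun j hj => ?_
  rw [(mem_filter.mp hj).2.2]

theorem treeCost_eq_add_sum_reducedCost (h : IsBellmanSolution_s11 r parent c w φ m) (x : ι → A) :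
    treeCost r parent c w x = φ r (x r) +
      ∑ j with j ≠ r, reducedCost w φ m j (x j) (x (parent j)) := by
  have sum_split : φ r (x r) + ∑ j with j ≠ r, φ j (x j) = ∑ i, φ i (x i) := by
    rw [filter_ne', add_sum_erase _ (fun j => φ j (x j)) (mem_univ r)]
  simp only [treeCost, reducedCost, sum_sub_distrib, sum_add_distrib]
  rw [← add_sub_assoc, add_left_comm, sum_split, h.sum_apply_eq_sum_cost_add_sum_inf]
  abel

variable [IsOrderedAddMonoid G]

theorem isGLB_range_reducedCost (h : IsBellmanSolution_s11 r parent c w φ m) {j : ι} (hj : j ≠ r)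
    (p : A) : IsGLB (Set.range fun q => reducedCost w φ m j q p) 0 := by
  have shifted := (OrderIso.subRight (m j p)).isGLB_image'.mpr (h.isGLB j hj p)
  rwa [← Set.range_comp, OrderIso.subRight_apply, sub_self] at shifted

theorem isGLB_treeCost_fiber [Preorder ι] (h : IsBellmanSolution_s11 r parent c w φ m)
    (hpar : ∀ j ≠ r, j < parent j) (p : A) :
    IsGLB (treeCost r parent c w '' {x | x r = p}) (φ r p) := by
  have fiber : {x : ι → A | ∀ i ∉ univ.filter (· ≠ r), x i = p} = {x | x r = p} := by simp
  have image_fiber : treeCost r parent c w '' {x | x r = p} = OrderIso.addLeft (φ r p) ''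
      ((fun x : ι → A => ∑ j with j ≠ r, reducedCost w φ m j (x j) (x (parent j))) ''
        {x | ∀ i ∉ univ.filter (· ≠ r), x i = p}) := by
    rw [fiber, Set.image_image]
    refine Set.image_congr fun x hx => ?_
    rw [h.treeCost_eq_add_sum_reducedCost, show x r = p from hx, OrderIso.addLeft_apply]
  have edges := isGLB_sum_edge (s := univ.filter (· ≠ r)) (by simpa using hpar)
    (fun j hj => h.isGLB_range_reducedCost (mem_filter.mp hj).2) (const ι p)
  have shifted := (OrderIso.addLeft (φ r p)).isGLB_image'.mpr edges
  rw [OrderIso.addLeft_apply, add_zero] at shifted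
  rwa [image_fiber]

end IsBellmanSolution_s11

theorem bellman_root_min_eq_min_totalCost_general [Preorder ι] [PartialOrder G]
    [IsOrderedAddMonoid G] {r : ι} {parent : ι → ι} (hpar : ∀ j ≠ r, j < parent j)
    {c : ι → A → G} {w : ι → A → A → G} {φ m : ι → A → G}
    (h : IsBellmanSolution_s11 r parent c w φ m) {v : G} :
    IsGLB (Set.range (φ r)) v ↔ IsGLB (Set.range (treeCost r parent c w)) v := by
  suffices lowerBounds (Set.range (φ r)) = lowerBounds (Set.range (treeCost r parent c w)) by
    rw [IsGLB, IsGLB, this]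
  ext b
  calc b ∈ lowerBounds (Set.range (φ r))
    _ ↔ ∀ p, b ≤ φ r p := Set.forall_mem_range
    _ ↔ ∀ p, b ∈ lowerBounds (treeCost r parent c w '' {x | x r = p}) :=
      forall_congr' fun p => le_isGLB_iff (h.isGLB_treeCost_fiber hpar p)
    _ ↔ b ∈ lowerBounds (Set.range (treeCost r parent c w)) := by
      simp only [mem_lowerBounds, Set.forall_mem_image, Set.forall_mem_range, Set.mem_ofPred_eq]
      exact ⟨fun hb x => hb (x r) rfl, fun hb _ x _ => hb x⟩

end Bellman

/-- If `φ` satisfies the Bellman equation, then the minimum of `φ r` over all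
root locations equals the minimum of the total network cost over all joint
assignments of locations to the Steiner nodes. -/
theorem bellman_root_min_eq_min_totalCost
    {M : ℕ} (hM : 1 ≤ M) (r : Fin M) (hr : (r : ℕ) = M - 1)
    (parent : Fin M → Fin M) (hpar : ∀ i : Fin M, i ≠ r → i < parent i)
    (hroot : parent r = r)
    {A : Type*} [Fintype A] [Nonempty A]
    (c : Fin M → A → ℝ) (w : Fin M → A → A → ℝ) (φ : Fin M → A → ℝ)
    (hφ : ∀ (i : Fin M) (p : A), φ i p = c i p +
      ∑ j ∈ Finset.univ.filter (fun j : Fin M => j ≠ r ∧ parent j = i),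
        Finset.univ.inf' Finset.univ_nonempty (fun q : A => w j q p + φ j q)) :
    Finset.univ.inf' Finset.univ_nonempty (fun p : A => φ r p) =
      Finset.univ.inf' Finset.univ_nonempty
        (fun x : Fin M → A => totalCost r parent c w x) :=
  ((bellman_root_min_eq_min_totalCost_general hpar
    ⟨hφ, fun _ _ _ => isGLB_range_univ_inf' _⟩).mp (isGLB_range_univ_inf' (φ r))).unique
    (isGLB_range_univ_inf' (totalCost r parent c w))
end
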